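/- Let C > 0 and define, on the set S = {(x,t) : t > 0, |x| < C e^{−π² t}}, the function U(x,t) = (1/π) arccos(−x e^{π² t}/C). Then U solves the reduced equation ∂_t U = ∂ₓ²U / (∂ₓU)² on S (equivalently ∂_t U = ∂ₓ(Φ(∂ₓU)) with Φ(s) = −1/s); U takes the boundary values U = 0 at the left interface x = L(t) = −C e^{−π² t} and U = 1 at the right interface x = R(t) = C e^{−π² t}; and the gradient ∂ₓU(x,t) = e^{π² t}/(π C sin(π U(x,t))) tends to +∞ as x approaches either interface and blows up exponentially, like e^{π² t}, as t → ∞ at interior points. -/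

import Mathlib

open Set Filter Topology Real

lemma aux_range {C E x : ℝ} (hC : 0 < C) (hE : 0 < E) (hx : |x| < C * E⁻¹) :
    0 < 1 - (x * E / C) ^ 2 := by
  have h1 : |x * E / C| < 1 := by
    rw [abs_div, abs_mul, abs_of_pos hC, abs_of_pos hE, div_lt_one hC]
    rwa [← div_eq_mul_inv, lt_div_iff₀ hE] at hx
  have := (sq_lt_one_iff_abs_lt_one (x * E / C)).2 h1
  linarith

lemma aux_arccos {f : ℝ → ℝ} {a d : ℝ} (hf : HasDerivAt f d a) (h : 0 < 1 - (f a) ^ 2) :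
    HasDerivAt (fun y => (1 / π) * Real.arccos (-(f y))) ((1 / π) * (d / √(1 - (f a) ^ 2))) a := by
  have h1 : -(f a) ≠ -1 := by
    intro h2
    have : f a = 1 := by linarith
    rw [this] at h; norm_num at h
  have h2 : -(f a) ≠ 1 := by
    intro h2
    have : f a = -1 := by linarith
    rw [this] at h; norm_num at h
  have := ((Real.hasDerivAt_arccos h1 h2).comp a hf.neg).const_mul (1 / π)
  refine this.congr_deriv ?_
  rw [neg_sq]
  ring

lemma aux_x {C E x : ℝ} (hC : 0 < C) (hE : 0 < E) (hx : |x| < C * E⁻¹) :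
    HasDerivAt (fun y => (1 / π) * Real.arccos (-(y * E) / C))
      ((1 / π) * ((E / C) / √(1 - (x * E / C) ^ 2))) x := by
  have h := aux_range hC hE hx
  have hf : HasDerivAt (fun y : ℝ => y * E / C) (E / C) x := by
    simpa using ((hasDerivAt_id x).mul_const E).div_const C
  simpa [neg_div] using aux_arccos hf h

lemma aux_xx {C E x : ℝ} (hC : 0 < C) (hE : 0 < E) (hx : |x| < C * E⁻¹) :
    HasDerivAt (deriv (fun y => (1 / π) * Real.arccos (-(y * E) / C)))
      ((1 / π) * ((E / C) ^ 2 * (x * E / C) / (√(1 - (x * E / C) ^ 2)) ^ 3)) x := by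
  have h := aux_range hC hE hx
  have hf : HasDerivAt (fun y : ℝ => y * E / C) (E / C) x := by
    simpa using ((hasDerivAt_id x).mul_const E).div_const C
  have hs : 0 < √(1 - (x * E / C) ^ 2) := Real.sqrt_pos.2 h
  have h1 := (((hasDerivAt_const x (E / C)).div (((hf.pow 2).const_sub 1).sqrt h.ne') hs.ne')).const_mul (1 / π)
  have hev : (deriv (fun y => (1 / π) * Real.arccos (-(y * E) / C))) =ᶠ[𝓝 x]
      fun y => (1 / π) * ((E / C) / √(1 - (y * E / C) ^ 2)) := by
    have : ∀ᶠ y in 𝓝 x, |y| < C * E⁻¹ :=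
      (continuous_abs.tendsto x).eventually (gt_mem_nhds hx)
    filter_upwards [this] with y hy
    exact (aux_x hC hE hy).deriv
  refine (HasDerivAt.congr_of_eventuallyEq h1 hev).congr_deriv ?_
  have hs' := hs.ne'
  generalize √(1 - (x * E / C) ^ 2) = r at *
  simp
  field_simp

lemma aux_lim {C E a : ℝ} {l : Filter ℝ} (hC : 0 < C) (hE : 0 < E) (hl : l ≤ 𝓝 a)
    (ha : (a * E / C) ^ 2 = 1) (hev : ∀ᶠ y in l, |y| < C * E⁻¹) :
    Tendsto (fun x => deriv (fun y => (1 / π) * Real.arccos (-(y * E) / C)) x) l atTop := by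
  have hc : Continuous fun y : ℝ => √(1 - (y * E / C) ^ 2) := by fun_prop
  have h0 : Tendsto (fun y : ℝ => √(1 - (y * E / C) ^ 2)) l (𝓝[>] 0) := by
    refine tendsto_nhdsWithin_iff.2 ⟨?_, ?_⟩
    · have := (hc.tendsto a).mono_left hl
      simpa [ha] using this
    · filter_upwards [hev] with y hy
      exact Real.sqrt_pos.2 (aux_range hC hE hy)
  have h1 := (tendsto_inv_nhdsGT_zero.comp h0).const_mul_atTop
    (show 0 < (1 / π) * (E / C) by positivity)
  refine h1.congr' ?_
  filter_upwards [hev] with y hy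
  rw [(aux_x hC hE hy).deriv]
  simp only [Function.comp]
  ring

/-- the case `α = 0`, Section 8 of Barenblatt–Vázquez.
On the strip `S = {(x,t) : t > 0, |x| < C e^{−π²t}}` the function
`U(x,t) = (1/π) arccos(−x e^{π²t}/C)` solves the reduced equation
`U_t = U_{xx}/(U_x)²` (i.e. `U_t = (Φ(U_x))_x` with `Φ(s) = −1/s`), takes the
boundary values `0` and `1` at the interfaces `L(t) = −C e^{−π²t}` and
`R(t) = C e^{−π²t}`, and its gradient `U_x = e^{π²t}/(πC sin(πU))` tends to `+∞`
at either interface and blows up exponentially, like `e^{π²t}`, as `t → ∞` at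
the interior point `x = 0`. -/
theorem alpha_zero_selfSimilar_solution
    (C : ℝ) (hC : 0 < C) (U : ℝ → ℝ → ℝ)
    (hU : ∀ x t : ℝ, U x t = (1 / π) * Real.arccos (-(x * Real.exp (π ^ 2 * t)) / C)) :
    (∀ x t : ℝ, 0 < t → |x| < C * Real.exp (-(π ^ 2) * t) →
      deriv (fun s => U x s) t =
        deriv (deriv (fun y => U y t)) x / (deriv (fun y => U y t) x) ^ 2) ∧
    (∀ t : ℝ, 0 < t →
      U (-(C * Real.exp (-(π ^ 2) * t))) t = 0 ∧ U (C * Real.exp (-(π ^ 2) * t)) t = 1) ∧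
    (∀ x t : ℝ, 0 < t → |x| < C * Real.exp (-(π ^ 2) * t) →
      deriv (fun y => U y t) x =
        Real.exp (π ^ 2 * t) / (π * C * Real.sin (π * U x t))) ∧
    (∀ t : ℝ, 0 < t →
      Tendsto (fun x => deriv (fun y => U y t) x)
        (nhdsWithin (-(C * Real.exp (-(π ^ 2) * t))) (Ioi (-(C * Real.exp (-(π ^ 2) * t)))))
        atTop ∧
      Tendsto (fun x => deriv (fun y => U y t) x)
        (nhdsWithin (C * Real.exp (-(π ^ 2) * t)) (Iio (C * Real.exp (-(π ^ 2) * t))))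
        atTop) ∧
    Tendsto (fun t => deriv (fun y => U y t) 0) atTop atTop := by
  obtain rfl : U = fun x t => (1 / π) * Real.arccos (-(x * Real.exp (π ^ 2 * t)) / C) := by
    funext x t; exact hU x t
  have hexp : ∀ t : ℝ, Real.exp (-(π ^ 2) * t) = (Real.exp (π ^ 2 * t))⁻¹ := by
    intro t; rw [neg_mul, Real.exp_neg]
  simp only [hexp]
  refine ⟨?_, ?_, ?_, ?_, ?_⟩
  · intro x t _ hx
    have hE := Real.exp_pos (π ^ 2 * t)
    have h := aux_range hC hE hx
    have hs : 0 < √(1 - (x * Real.exp (π ^ 2 * t) / C) ^ 2) := Real.sqrt_pos.2 h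
    have hf : HasDerivAt (fun s : ℝ => x * Real.exp (π ^ 2 * s) / C)
        (x * (Real.exp (π ^ 2 * t) * π ^ 2) / C) t := by
      have h3 : HasDerivAt (fun s : ℝ => π ^ 2 * s) (π ^ 2) t := by
        simpa using (hasDerivAt_id t).const_mul (π ^ 2)
      exact (h3.exp.const_mul x).div_const C
    have ht := aux_arccos hf h
    simp only [← neg_div] at ht
    rw [ht.deriv, (aux_xx hC hE hx).deriv, (aux_x hC hE hx).deriv]
    have hs' := hs.ne'
    generalize √(1 - (x * Real.exp (π ^ 2 * t) / C) ^ 2) = r at *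
    have hp := Real.pi_ne_zero
    field_simp
  · intro t _
    have hE := (Real.exp_pos (π ^ 2 * t)).ne'
    have hC' := hC.ne'
    have hp := Real.pi_ne_zero
    constructor
    · have : -(-(C * (Real.exp (π ^ 2 * t))⁻¹) * Real.exp (π ^ 2 * t)) / C = 1 := by
        field_simp
      rw [this]; simp
    · have : -((C * (Real.exp (π ^ 2 * t))⁻¹) * Real.exp (π ^ 2 * t)) / C = -1 := by
        field_simp
      rw [this]; simp
  · intro x t _ hx
    have hE := Real.exp_pos (π ^ 2 * t)
    have hp := Real.pi_ne_zero
    rw [(aux_x hC hE hx).deriv, ← mul_assoc, mul_one_div_cancel hp, one_mul, Real.sin_arccos,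
      neg_div, neg_sq]
    have hs : 0 < √(1 - (x * Real.exp (π ^ 2 * t) / C) ^ 2) :=
      Real.sqrt_pos.2 (aux_range hC hE hx)
    field_simp
  · intro t _
    have hE := Real.exp_pos (π ^ 2 * t)
    have hpos : 0 < C * (Real.exp (π ^ 2 * t))⁻¹ := by positivity
    constructor
    · refine aux_lim hC hE nhdsWithin_le_nhds ?_ ?_
      · field_simp
      · filter_upwards [Ioo_mem_nhdsGT (neg_lt_self hpos)] with y hy
        exact abs_lt.2 hy
    · refine aux_lim hC hE nhdsWithin_le_nhds ?_ ?_
      · field_simp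
      · filter_upwards [Ioo_mem_nhdsLT (neg_lt_self hpos)] with y hy
        exact abs_lt.2 hy
  · have h1 : ∀ t : ℝ, deriv (fun y => (1 / π) * Real.arccos (-(y * Real.exp (π ^ 2 * t)) / C)) 0
        = (1 / (π * C)) * Real.exp (π ^ 2 * t) := by
      intro t
      have hE := Real.exp_pos (π ^ 2 * t)
      have hx : |(0 : ℝ)| < C * (Real.exp (π ^ 2 * t))⁻¹ := by rw [abs_zero]; positivity
      rw [(aux_x hC hE hx).deriv]
      simp
      field_simp
    simp only [h1]
    exact (Real.tendsto_exp_atTop.comp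
      (tendsto_id.const_mul_atTop (show 0 < π ^ 2 by positivity))).const_mul_atTop
      (show 0 < 1 / (π * C) by positivity)
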